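/- arXiv:2307.15211 — 2 statements merged into one kernel-verified Lean document; each statement's English description precedes it below -/
import Mathlib

section
/- Let D_1, D_2, D_3, D_4 be the four chord diagrams of order n obtained from a common configuration as described. For every set A of chords with c' ∈ A and c ∉ A (regarding A as a set of chords of each D_i), the genera of the corresponding partial duals satisfy g_A(D_1) = g_A(D_2) and g_A(D_3) = g_A(D_4). -/
/-- Number of cycles (orbits, counting fixed points) of a self-map:
the number of connected components of its functional graph. For a permutation
this is the number of cycles, counting fixed points. -/
noncomputable def cycles {α : Type*} (f : α → α) : ℕ :=
  Nat.card (Quot fun i j => f i = j)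

-- `restrictTo σ A` agrees with `σ` on `A` and fixes everything else.
-- If `A` is the set of endpoints of a set of chords of `σ`, this is `σ_A`.
open Classical in
noncomputable def restrictTo {α : Type*} (f : α → α) (A : Set α) : α → α :=
  fun i => if i ∈ A then f i else i

/-- The rotation `i ↦ i + 1` of the `2n` points of a chord diagram. -/
def rot (n : ℕ) : ZMod (2 * n) → ZMod (2 * n) := fun i => i + 1

/-- Genus of the partial dual of the chord diagram `σ` relative to the set of
chords whose endpoint set is the (`σ`-invariant) set `A`. -/
noncomputable def pdGenus (n : ℕ) (σ : ZMod (2 * n) → ZMod (2 * n))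
    (A : Set (ZMod (2 * n))) : ℕ :=
  (n + 2 - cycles (rot n ∘ restrictTo σ A) - cycles (rot n ∘ restrictTo σ Aᶜ)) / 2

/-- Genus of the one-vertex ribbon graph of the chord diagram `σ`. -/
noncomputable def genus (n : ℕ) (σ : ZMod (2 * n) → ZMod (2 * n)) : ℕ :=
  (n + 1 - cycles (rot n ∘ σ)) / 2

/-- The partial-dual genus polynomial `∂Γ_σ(z) = Σ_A z^{g_A(σ)}`, the sum being
over all sets `A` of chords of `σ` (encoded as `σ`-invariant subsets of the
`2n` points). -/
noncomputable def pdPoly (n : ℕ) (σ : ZMod (2 * n) → ZMod (2 * n)) : Polynomial ℤ :=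
  if h : n = 0 then 1 else
    haveI : NeZero (2 * n) := ⟨by omega⟩
    ∑ A ∈ Finset.univ.filter (fun A : Finset (ZMod (2 * n)) => ∀ i ∈ A, σ i ∈ A),
      Polynomial.X ^ pdGenus n σ (↑A : Set (ZMod (2 * n)))

/-- `φ : ZMod (2n-1) → ZMod (2n)` is the cyclic-order-preserving identification of
the `2n-1` configuration points with the complement of the inserted point `x`:
it avoids `x` and each step advances by one position on the circle, skipping `x`. -/
def IsInsertion {m N : ℕ} (φ : ZMod m → ZMod N) (x : ZMod N) : Prop :=
  φ 0 ≠ x ∧ ∀ j, φ (j + 1) = if φ j + 1 = x then φ j + 2 else φ j + 1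

/-- A configuration of `2n-1` marked points on the circle: a distinguished chord
`c = {p, q}`, a distinguished unpaired point `u`, and a fixed-point-free pairing
of the remaining `2n-4` points into background chords; all encoded by the
involution `τ` whose unique fixed point is `u` and with `τ p = q`. -/
def IsConfig (n : ℕ) (τ : ZMod (2 * n - 1) → ZMod (2 * n - 1))
    (p q u : ZMod (2 * n - 1)) : Prop :=
  Function.Involutive τ ∧ τ p = q ∧ p ≠ q ∧ τ u = u ∧ ∀ j, τ j = j → j = u

/-- `D` is the chord diagram of order `n` obtained from the configuration `τ`
by inserting the extra point `x` (via the order-preserving identification `φ`)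
together with the new chord `c' = {x, u}`; all other chords are unchanged. -/
def IsInsertedDiagram (n : ℕ) (τ : ZMod (2 * n - 1) → ZMod (2 * n - 1))
    (u : ZMod (2 * n - 1)) (φ : ZMod (2 * n - 1) → ZMod (2 * n)) (x : ZMod (2 * n))
    (D : ZMod (2 * n) → ZMod (2 * n)) : Prop :=
  IsInsertion φ x ∧ (∀ j, j ≠ u → D (φ j) = φ (τ j)) ∧ D (φ u) = x ∧ D x = φ u

/-! Inserting `x` just before or just after `p` gives the same chords on the same `2n` points; only
the cyclic order changes, by exchanging the neighbours `x` and `p`. A point fixed by `σ` is merely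
passed through by `r ∘ σ`, so deleting it from the cyclic order does not affect the number of
cycles. Since `c ∉ A`, the point `p` is fixed by `σ_A`; since `c' ∈ A`, the point `x` is fixed by
`σ_{A^c}`. Deleting either of `p` and `x` makes the two cyclic orders agree. -/

open Function Set

section Cycles

variable {α β : Type*}

theorem quot_mk_apply_eq (f : α → α) (b : α) :
    Quot.mk (fun i j => f i = j) (f b) = Quot.mk _ b :=
  (Quot.sound (r := fun i j => f i = j) rfl).symm

theorem cycles_comp_comm (f : α → β) (g : β → α) : cycles (f ∘ g) = cycles (g ∘ f) :=
  Nat.card_congr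
    { toFun := Quot.map g fun i _ h => congrArg g (h : f (g i) = _)
      invFun := Quot.map f fun i _ h => congrArg f (h : g (f i) = _)
      left_inv := by rintro ⟨b⟩; exact quot_mk_apply_eq (f ∘ g) b
      right_inv := by rintro ⟨a⟩; exact quot_mk_apply_eq (g ∘ f) a }

theorem cycles_eq_of_quot_mk_eq {f g : α → α}
    (hfg : ∀ b, Quot.mk (fun i j => f i = j) (g b) = Quot.mk _ b)
    (hgf : ∀ b, Quot.mk (fun i j => g i = j) (f b) = Quot.mk _ b) : cycles f = cycles g :=
  Nat.card_congr
    { toFun := Quot.lift (Quot.mk _) (by rintro b _ rfl; exact (hgf b).symm)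
      invFun := Quot.lift (Quot.mk _) (by rintro b _ rfl; exact (hfg b).symm)
      left_inv := by rintro ⟨b⟩; rfl
      right_inv := by rintro ⟨b⟩; rfl }

theorem cycles_eq_of_eqOn_compl_singleton {f g : α → α} {a : α} (hf : ∀ b, f b ≠ a)
    (hg : ∀ b, g b ≠ a) (h : EqOn f g {a}ᶜ) : cycles f = cycles g := by
  classical
  let π : α → α := update id a (f a)
  have π_of_ne {b : α} (hb : b ≠ a) : π b = b := update_of_ne hb _ _
  have π_ne (b : α) : π b ≠ a := by
    by_cases hb : b = a
    · simpa [π, hb] using hf a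
    · rwa [π_of_ne hb]
  calc
    cycles f = cycles (π ∘ f) := congrArg cycles (funext fun b => (π_of_ne (hf b)).symm)
    _ = cycles (f ∘ π) := cycles_comp_comm π f
    _ = cycles (g ∘ π) := congrArg cycles (funext fun b => h (π_ne b))
    _ = cycles (π ∘ g) := cycles_comp_comm g π
    _ = cycles g := congrArg cycles (funext fun b => π_of_ne (hg b))

end Cycles

section Bypass

variable {α β : Type*} [DecidableEq α] [DecidableEq β]

/-- The self-map `f` with the point `a` deleted: arrows of `f` into `a` are redirected to `f a`.
For a cyclic order `f` this is the induced cyclic order on the points other than `a`. It is kept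
as a map of the whole type, where `a` itself is still sent to `f a`. -/
def bypass (f : α → α) (a b : α) : α := if f b = a then f a else f b

theorem bypass_ne {f : α → α} {a : α} (ha : f a ≠ a) (b : α) : bypass f a b ≠ a := by
  unfold bypass
  split_ifs <;> assumption

theorem bypass_conj (e : α ≃ β) (f : β → β) (a b : α) :
    bypass (e.symm ∘ f ∘ e) a b = e.symm (bypass f (e a) (e b)) := by
  simp only [bypass, comp_apply, e.symm_apply_eq, apply_ite e.symm]

theorem cycles_bypass (f : α → α) (a : α) : cycles (bypass f a) = cycles f := by
  refine cycles_eq_of_quot_mk_eq (fun b => ?_) fun b => ?_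
  · by_cases hb : f b = a
    · have ha : bypass f a a = bypass f a b := by simp [bypass, hb]
      rw [hb, ← quot_mk_apply_eq (bypass f a) a, ha, quot_mk_apply_eq]
    · have hb' : bypass f a b = f b := if_neg hb
      rw [← hb', quot_mk_apply_eq]
  · unfold bypass
    split_ifs with hb
    · rw [← hb, quot_mk_apply_eq, quot_mk_apply_eq]
    · exact quot_mk_apply_eq f b

theorem cycles_eq_of_bypass_eqOn {f g : α → α} {a : α} (hf : f a ≠ a) (hg : g a ≠ a)
    (h : EqOn (bypass f a) (bypass g a) {a}ᶜ) : cycles f = cycles g := by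
  rw [← cycles_bypass f a, ← cycles_bypass g a]
  exact cycles_eq_of_eqOn_compl_singleton (bypass_ne hf) (bypass_ne hg) h

theorem bypass_comp {σ : α → α} {a : α} (hσ : σ a = a) (f : α → α) :
    bypass (f ∘ σ) a = bypass f a ∘ σ := by
  funext b
  simp only [bypass, comp_apply, hσ]

-- The picture is `… → a → b → …` in `f` and `… → b → a → …` in `g`.
theorem bypass_eqOn_of_swapped {f g : α → α} (hf : Injective f) (hg : Injective g) {a b : α}
    (hfa : f a = b) (hgb : g b = a) (h : EqOn (bypass f a) (bypass g a) {a}ᶜ) :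
    EqOn (bypass f b) (bypass g b) {b}ᶜ := by
  obtain rfl | hab := eq_or_ne a b
  · exact h
  intro y hy
  obtain rfl | hya := eq_or_ne y a
  · have hgy : bypass f y b = g y := by simpa only [bypass, hgb, if_true] using h hab.symm
    have hfb : f b ≠ b := fun hb => hab (hf (hfa.trans hb.symm))
    grind [bypass]
  · have hfy : f y ≠ b := hfa ▸ hf.ne hya
    have hgy : g y ≠ a := hgb ▸ hg.ne hy
    have hfg : (if f y = a then b else f y) = g y := by
      simpa only [bypass, hfa, if_neg hgy] using h hya
    grind [bypass]

end Bypass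

section RestrictTo

variable {α β : Type*}

theorem restrictTo_of_notMem (f : α → α) {A : Set α} {a : α} (ha : a ∉ A) :
    restrictTo f A a = a :=
  if_neg ha

theorem mapsTo_restrictTo_compl_singleton {f : α → α} {A : Set α} (hA : MapsTo f A A) {a : α}
    (ha : a ∉ A) : MapsTo (restrictTo f A) {a}ᶜ {a}ᶜ := by
  intro b hb
  unfold restrictTo
  split_ifs with hbA
  · exact ne_of_mem_of_not_mem (hA hbA) ha
  · exact hb

theorem semiconj_restrictTo_image {e : α → β} (he : Injective e) {f : α → α} {g : β → β}
    (h : Semiconj e f g) (A : Set α) :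
    Semiconj e (restrictTo f A) (restrictTo g (e '' A)) := by
  intro b
  by_cases hb : b ∈ A <;> simp [restrictTo, hb, he.mem_set_image, h.eq]

theorem cycles_comp_restrictTo_image (e : α ≃ β) {f : α → α} {g : β → β} (h : Semiconj e f g)
    (r : β → β) (A : Set α) :
    cycles (r ∘ restrictTo g (e '' A)) = cycles ((e.symm ∘ r ∘ e) ∘ restrictTo f A) := by
  have he : restrictTo g (e '' A) = e ∘ restrictTo f A ∘ e.symm := by
    funext b
    simpa using ((semiconj_restrictTo_image e.injective h A).eq (e.symm b)).symm
  rw [he, comp_assoc, cycles_comp_comm e.symm]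
  rfl

theorem cycles_comp_restrictTo_congr [DecidableEq α] {r s f : α → α} {A : Set α}
    (hA : MapsTo f A A) {a : α} (ha : a ∉ A) (hr : r a ≠ a) (hs : s a ≠ a)
    (h : EqOn (bypass r a) (bypass s a) {a}ᶜ) :
    cycles (r ∘ restrictTo f A) = cycles (s ∘ restrictTo f A) := by
  have hσ : restrictTo f A a = a := restrictTo_of_notMem f ha
  refine cycles_eq_of_bypass_eqOn (a := a) (by simpa [hσ]) (by simpa [hσ]) ?_
  rw [bypass_comp hσ, bypass_comp hσ]
  exact fun b hb => h (mapsTo_restrictTo_compl_singleton hA ha hb)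

end RestrictTo

theorem pdGenus_image {α : Type*} (n : ℕ) (e : α ≃ ZMod (2 * n)) {D : α → α}
    {E : ZMod (2 * n) → ZMod (2 * n)} (h : Semiconj e D E) (A : Set α) :
    pdGenus n E (e '' A) = (n + 2 - cycles ((e.symm ∘ rot n ∘ e) ∘ restrictTo D A) -
      cycles ((e.symm ∘ rot n ∘ e) ∘ restrictTo D Aᶜ)) / 2 := by
  rw [pdGenus, ← image_compl_eq e.bijective, cycles_comp_restrictTo_image e h,
    cycles_comp_restrictTo_image e h]

theorem rot_ne_self {n : ℕ} (a : ZMod (2 * n)) : rot n a ≠ a := by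
  have : Nontrivial (ZMod (2 * n)) := ZMod.nontrivial_iff.2 (by lia)
  simp [rot]

theorem zmod_eq_univ_of_add_one_mem {N : ℕ} [NeZero N] {R : Set (ZMod N)} (hR : R.Nonempty)
    (h : ∀ y ∈ R, y + 1 ∈ R) : R = univ := by
  obtain ⟨y₀, hy₀⟩ := hR
  have hmem (k : ℕ) : y₀ + k ∈ R := by
    induction k with
    | zero => simpa
    | succ k ih => simpa [add_assoc] using h _ ih
  refine eq_univ_of_forall fun y => ?_
  simpa using hmem (y - y₀).val

section Insertion

variable {m N : ℕ} {φ φ₁ φ₂ : ZMod m → ZMod N} {x x₁ x₂ : ZMod N}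

theorem IsInsertion.apply_add_one (h : IsInsertion φ x) (j : ZMod m) :
    φ (j + 1) = bypass (· + 1) x (φ j) := by
  rw [h.2 j, bypass]
  split_ifs with hj
  · rw [← hj, add_assoc, one_add_one_eq_two]
  · rfl

theorem IsInsertion.add_one_mem_range [NeZero N] (h : IsInsertion φ x) : x + 1 ∈ range φ := by
  by_contra hx
  have hstep : ∀ y ∈ range φ, y + 1 ∈ range φ := by
    rintro _ ⟨j, rfl⟩
    have hj := h.apply_add_one j
    unfold bypass at hj
    split_ifs at hj
    · exact absurd ⟨_, hj⟩ hx
    · exact ⟨_, hj⟩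
  exact hx (zmod_eq_univ_of_add_one_mem (range_nonempty φ) hstep ▸ mem_univ _)

theorem IsInsertion.surjective_elim [NeZero N] (h : IsInsertion φ x) :
    Surjective fun o : Option (ZMod m) => o.elim x φ := by
  rw [← range_eq_univ]
  refine zmod_eq_univ_of_add_one_mem (range_nonempty _) ?_
  rintro _ ⟨_ | j, rfl⟩
  · obtain ⟨j, hj⟩ := h.add_one_mem_range
    exact ⟨some j, hj⟩
  · by_cases hj : φ j + 1 = x
    · exact ⟨none, hj.symm⟩
    · exact ⟨some (j + 1), (h.apply_add_one j).trans (if_neg hj)⟩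

/-- The points of the circle with `x` inserted, labelled by the configuration points (`some j`)
and the new point (`none`). -/
noncomputable def IsInsertion.equiv [NeZero m] (h : IsInsertion φ x) (hN : N = m + 1) :
    Option (ZMod m) ≃ ZMod N :=
  have : NeZero N := ⟨by lia⟩
  Equiv.ofBijective _ (h.surjective_elim.bijective_of_nat_card_le (by simp [hN]))

theorem IsInsertion.injective [NeZero m] (h : IsInsertion φ x) (hN : N = m + 1) : Injective φ :=
  (h.equiv hN).injective.comp (Option.some_injective _)

theorem IsInsertion.apply_ne [NeZero m] (h : IsInsertion φ x) (hN : N = m + 1) (j : ZMod m) :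
    φ j ≠ x :=
  fun hj => Option.some_ne_none j ((h.equiv hN).injective hj)

theorem IsInsertion.mem_image_union_singleton_iff [NeZero m] (h : IsInsertion φ x)
    (hN : N = m + 1) {B : Set (ZMod m)} {j : ZMod m} : φ j ∈ φ '' B ∪ {x} ↔ j ∈ B := by
  simp [(h.injective hN).mem_set_image, h.apply_ne hN]

theorem IsInsertion.eq_or_mem_range [NeZero N] (h : IsInsertion φ x) (y : ZMod N) :
    y = x ∨ y ∈ range φ := by
  obtain ⟨_ | j, rfl⟩ := h.surjective_elim y
  exacts [Or.inl rfl, Or.inr ⟨j, rfl⟩]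

theorem IsInsertion.exists_equiv [NeZero m] (h₁ : IsInsertion φ₁ x₁) (h₂ : IsInsertion φ₂ x₂)
    (hN : N = m + 1) : ∃ e : ZMod N ≃ ZMod N, e x₁ = x₂ ∧ ∀ j, e (φ₁ j) = φ₂ j := by
  refine ⟨(h₁.equiv hN).symm.trans (h₂.equiv hN), ?_, fun j => ?_⟩
  · exact congrArg (h₂.equiv hN) ((h₁.equiv hN).symm_apply_apply none)
  · exact congrArg (h₂.equiv hN) ((h₁.equiv hN).symm_apply_apply (some j))

theorem IsInsertion.bypass_eqOn [NeZero N] (h₁ : IsInsertion φ₁ x₁) (h₂ : IsInsertion φ₂ x₂)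
    {e : ZMod N ≃ ZMod N} (hx : e x₁ = x₂) (hφ : ∀ j, e (φ₁ j) = φ₂ j) :
    EqOn (bypass (· + 1) x₁) (bypass (e.symm ∘ (· + 1) ∘ e) x₁) {x₁}ᶜ := by
  intro y hy
  obtain ⟨j, rfl⟩ := (h₁.eq_or_mem_range y).resolve_left hy
  rw [bypass_conj, hx, hφ, ← h₁.apply_add_one, ← h₂.apply_add_one, ← hφ, e.symm_apply_apply]

theorem IsInsertion.bypass_eqOn_of_adjacent [NeZero N] (h₁ : IsInsertion φ₁ x₁)
    (h₂ : IsInsertion φ₂ x₂) {p : ZMod m} (hx₁ : x₁ + 1 = φ₁ p) (hx₂ : x₂ = φ₂ p + 1)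
    {e : ZMod N ≃ ZMod N} (hx : e x₁ = x₂) (hφ : ∀ j, e (φ₁ j) = φ₂ j) :
    EqOn (bypass (· + 1) (φ₁ p)) (bypass (e.symm ∘ (· + 1) ∘ e) (φ₁ p)) {φ₁ p}ᶜ := by
  have succ_injective : Injective fun y : ZMod N => y + 1 := add_left_injective 1
  have hp : (e.symm ∘ (· + 1) ∘ e) (φ₁ p) = x₁ := by
    simp only [comp_apply, hφ, ← hx₂, ← hx, e.symm_apply_apply]
  exact bypass_eqOn_of_swapped succ_injective
    (e.symm.injective.comp (succ_injective.comp e.injective)) hx₁ hp (h₁.bypass_eqOn h₂ hx hφ)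

end Insertion

section InsertedDiagram

variable {n : ℕ} {τ : ZMod (2 * n - 1) → ZMod (2 * n - 1)} {u : ZMod (2 * n - 1)}
  {φ φ₁ φ₂ : ZMod (2 * n - 1) → ZMod (2 * n)} {x x₁ x₂ : ZMod (2 * n)}
  {D D₁ D₂ : ZMod (2 * n) → ZMod (2 * n)} {B : Set (ZMod (2 * n - 1))}

theorem IsInsertedDiagram.mapsTo (h : IsInsertedDiagram n τ u φ x D) (hB : MapsTo τ B B)
    (hu : u ∈ B) : MapsTo D (φ '' B ∪ {x}) (φ '' B ∪ {x}) := by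
  obtain ⟨-, hD, hDu, hDx⟩ := h
  rintro _ (⟨j, hj, rfl⟩ | rfl)
  · by_cases hju : j = u
    · exact Or.inr (hju ▸ hDu)
    · exact Or.inl ⟨τ j, hB hj, (hD j hju).symm⟩
  · exact Or.inl ⟨u, hu, hDx.symm⟩

theorem IsInsertedDiagram.mapsTo_compl [NeZero n] (h : IsInsertedDiagram n τ u φ x D)
    (hB : MapsTo τ Bᶜ Bᶜ) (hu : u ∈ B) :
    MapsTo D (φ '' B ∪ {x})ᶜ (φ '' B ∪ {x})ᶜ := by
  have hn : n ≠ 0 := NeZero.ne n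
  have : NeZero (2 * n - 1) := ⟨by lia⟩
  obtain ⟨hins, hD, -, -⟩ := h
  have hmem {j} : φ j ∈ φ '' B ∪ {x} ↔ j ∈ B := hins.mem_image_union_singleton_iff (by lia)
  intro y hy
  obtain rfl | ⟨j, rfl⟩ := hins.eq_or_mem_range y
  · exact absurd (Or.inr rfl) hy
  · have hj : j ∉ B := mt hmem.2 hy
    rw [hD j (ne_of_mem_of_not_mem hu hj).symm]
    exact mt hmem.1 (hB hj)

theorem IsInsertedDiagram.semiconj [NeZero n] (h₁ : IsInsertedDiagram n τ u φ₁ x₁ D₁)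
    (h₂ : IsInsertedDiagram n τ u φ₂ x₂ D₂) {e : ZMod (2 * n) → ZMod (2 * n)}
    (hx : e x₁ = x₂) (hφ : ∀ j, e (φ₁ j) = φ₂ j) : Semiconj e D₁ D₂ := by
  obtain ⟨hins, hD₁, hDu₁, hDx₁⟩ := h₁
  obtain ⟨-, hD₂, hDu₂, hDx₂⟩ := h₂
  intro y
  obtain rfl | ⟨j, rfl⟩ := hins.eq_or_mem_range y
  · rw [hDx₁, hφ, hx, hDx₂]
  · by_cases hj : j = u
    · rw [hj, hDu₁, hφ, hx, hDu₂]
    · rw [hD₁ j hj, hφ, hφ, hD₂ j hj]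

end InsertedDiagram

theorem pdGenus_eq_of_c'_not_c_general {n : ℕ} (hn : n ≠ 0)
    {τ : ZMod (2 * n - 1) → ZMod (2 * n - 1)} (hτ : Involutive τ) {p u : ZMod (2 * n - 1)}
    {φ₁ φ₂ : ZMod (2 * n - 1) → ZMod (2 * n)} {x₁ x₂ : ZMod (2 * n)}
    {D₁ D₂ : ZMod (2 * n) → ZMod (2 * n)}
    (h₁ : IsInsertedDiagram n τ u φ₁ x₁ D₁) (hx₁ : x₁ + 1 = φ₁ p)
    (h₂ : IsInsertedDiagram n τ u φ₂ x₂ D₂) (hx₂ : x₂ = φ₂ p + 1)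
    {B : Set (ZMod (2 * n - 1))} (hB : MapsTo τ B B) (hp : p ∉ B) (hu : u ∈ B) :
    pdGenus n D₁ (φ₁ '' B ∪ {x₁}) = pdGenus n D₂ (φ₂ '' B ∪ {x₂}) := by
  have : NeZero n := ⟨hn⟩
  have : NeZero (2 * n - 1) := ⟨by lia⟩
  obtain ⟨e, hx, hφ⟩ := h₁.1.exists_equiv h₂.1 (by lia)
  have hB_compl : MapsTo τ Bᶜ Bᶜ := fun j hj h => hj (hτ j ▸ hB h)
  let s := e.symm ∘ rot n ∘ e
  have hs (y) : s y ≠ y := fun h => rot_ne_self (e y) (e.symm_apply_eq.1 h)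
  have himage : e '' (φ₁ '' B ∪ {x₁}) = φ₂ '' B ∪ {x₂} := by
    rw [image_union, image_image, image_singleton, hx]
    simp only [hφ]
  have cycles_A : cycles (rot n ∘ restrictTo D₁ (φ₁ '' B ∪ {x₁})) =
      cycles (s ∘ restrictTo D₁ (φ₁ '' B ∪ {x₁})) :=
    cycles_comp_restrictTo_congr (h₁.mapsTo hB hu)
      (mt (h₁.1.mem_image_union_singleton_iff (by lia)).1 hp) (rot_ne_self _) (hs _)
      (h₁.1.bypass_eqOn_of_adjacent h₂.1 hx₁ hx₂ hx hφ)
  have cycles_A_compl : cycles (rot n ∘ restrictTo D₁ (φ₁ '' B ∪ {x₁})ᶜ) =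
      cycles (s ∘ restrictTo D₁ (φ₁ '' B ∪ {x₁})ᶜ) :=
    cycles_comp_restrictTo_congr (h₁.mapsTo_compl hB_compl hu)
      (not_not_intro (Or.inr rfl)) (rot_ne_self _) (hs _)
      (h₁.1.bypass_eqOn h₂.1 hx hφ)
  rw [← himage, pdGenus_image n e (h₁.semiconj h₂ hx hφ), pdGenus, cycles_A, cycles_A_compl]

/-- For a set `A` of chords with `c' ∈ A` and `c ∉ A`, the partial duals satisfy
`g_A(D₁) = g_A(D₂)` and `g_A(D₃) = g_A(D₄)`. -/
theorem pdGenus_eq_of_c'_not_c (n : ℕ) (hn : 2 ≤ n)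
    (τ : ZMod (2 * n - 1) → ZMod (2 * n - 1)) (p q u : ZMod (2 * n - 1))
    (hτ : IsConfig n τ p q u)
    (φ₁ φ₂ φ₃ φ₄ : ZMod (2 * n - 1) → ZMod (2 * n))
    (x₁ x₂ x₃ x₄ : ZMod (2 * n))
    (D₁ D₂ D₃ D₄ : ZMod (2 * n) → ZMod (2 * n))
    (h₁ : IsInsertedDiagram n τ u φ₁ x₁ D₁) (hx₁ : x₁ + 1 = φ₁ p)
    (h₂ : IsInsertedDiagram n τ u φ₂ x₂ D₂) (hx₂ : x₂ = φ₂ p + 1)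
    (h₃ : IsInsertedDiagram n τ u φ₃ x₃ D₃) (hx₃ : x₃ + 1 = φ₃ q)
    (h₄ : IsInsertedDiagram n τ u φ₄ x₄ D₄) (hx₄ : x₄ = φ₄ q + 1)
    (B : Set (ZMod (2 * n - 1))) (hB : ∀ j ∈ B, τ j ∈ B)
    (hc : p ∉ B) (hc' : u ∈ B) :
    pdGenus n D₁ (φ₁ '' B ∪ {x₁}) = pdGenus n D₂ (φ₂ '' B ∪ {x₂}) ∧
    pdGenus n D₃ (φ₃ '' B ∪ {x₃}) = pdGenus n D₄ (φ₄ '' B ∪ {x₄}) := by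
  obtain ⟨hinv, rfl, -⟩ := hτ
  have hq : τ p ∉ B := fun h => hc (hinv p ▸ hB _ h)
  exact ⟨pdGenus_eq_of_c'_not_c_general (by lia) hinv h₁ hx₁ h₂ hx₂ hB hc hc',
    pdGenus_eq_of_c'_not_c_general (by lia) hinv h₃ hx₃ h₄ hx₄ hB hq hc'⟩
end

section
/- The partial-dual genus polynomial is invariant under rotation of the chord diagram: for every chord diagram σ of order n, ∂Γ_{r ∘ σ ∘ r⁻¹}(z) = ∂Γ_σ(z), where r ∘ σ ∘ r⁻¹ is the chord diagram obtained from σ by rotating all chord endpoints one step along the circle. -/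
/-!
A permutation `e` of the points that commutes with `r` and carries `σ` to `τ` conjugates
`r ∘ σ_A` to `r ∘ τ_{e(A)}`, and likewise for the complements of `A` and `e(A)`. Conjugate maps
have the same number of cycles, so `A ↦ e(A)` is a genus-preserving bijection between the sets of
chords of `σ` and those of `τ`. Every rotation commutes with `r`.
-/

section Semiconj

open Function

variable {α β : Type*} {f : α → α} {g : β → β}

theorem cycles_eq_of_semiconj (e : α ≃ β) (h : Semiconj e f g) : cycles f = cycles g :=
  Nat.card_congr <| Quot.congr e fun i j => by rw [← h.eq, e.apply_eq_iff_eq]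

theorem semiconj_restrictTo {φ : α → β} (h : Semiconj φ f g) (B : Set β) :
    Semiconj φ (restrictTo f (φ ⁻¹' B)) (restrictTo g B) := fun i => by
  by_cases hi : φ i ∈ B <;> simp [restrictTo, hi, h.eq]

theorem forall_mem_map_iff_of_semiconj (φ : α ↪ β) (h : Semiconj φ f g) (A : Finset α) :
    (∀ j ∈ A.map φ, g j ∈ A.map φ) ↔ ∀ i ∈ A, f i ∈ A := by
  simp_rw [Finset.forall_mem_map, ← h.eq, Finset.mem_map']

variable {n : ℕ} {σ τ : ZMod (2 * n) → ZMod (2 * n)} {e : Equiv.Perm (ZMod (2 * n))}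

theorem pdGenus_preimage_of_semiconj (hr : Function.Commute e (rot n)) (h : Semiconj e σ τ)
    (B : Set (ZMod (2 * n))) : pdGenus n σ (e ⁻¹' B) = pdGenus n τ B := by
  have hcycles (C : Set (ZMod (2 * n))) :
      cycles (rot n ∘ restrictTo σ (e ⁻¹' C)) = cycles (rot n ∘ restrictTo τ C) :=
    cycles_eq_of_semiconj e <| hr.semiconj.comp_right (semiconj_restrictTo h C)
  rw [pdGenus, pdGenus, ← Set.preimage_compl, hcycles, hcycles]

theorem pdPoly_eq_of_semiconj (hn : n ≠ 0) (hr : Function.Commute e (rot n))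
    (h : Semiconj e σ τ) : pdPoly n σ = pdPoly n τ := by
  rw [pdPoly, pdPoly, dif_neg hn, dif_neg hn]
  refine Finset.sum_equiv e.finsetCongr (fun A => ?_) (fun A _ => ?_)
  · simpa only [Finset.mem_filter, Finset.mem_univ, true_and, Equiv.finsetCongr_apply] using
      (forall_mem_map_iff_of_semiconj e.toEmbedding h A).symm
  · rw [← pdGenus_preimage_of_semiconj hr h, Equiv.finsetCongr_apply, Finset.coe_map,
      Equiv.coe_toEmbedding, e.preimage_image]

end Semiconj

theorem pdPoly_rotation_invariant_general {n : ℕ} (hn : n ≠ 0)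
    (σ : ZMod (2 * n) → ZMod (2 * n)) (k : ZMod (2 * n)) :
    pdPoly n (fun i => σ (i - k) + k) = pdPoly n σ := by
  have hr : Function.Commute (Equiv.addRight k) (rot n) := fun i => add_right_comm i 1 k
  have hσ : Function.Semiconj (Equiv.addRight k) σ (fun i => σ (i - k) + k) := fun i => by simp
  exact (pdPoly_eq_of_semiconj hn hr hσ).symm

/-- The partial-dual genus polynomial is invariant under rotation of the chord diagram:
`∂Γ_{r ∘ σ ∘ r⁻¹} = ∂Γ_σ`, where `(r ∘ σ ∘ r⁻¹) i = σ (i - 1) + 1`. -/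
theorem pdPoly_rotation_invariant (n : ℕ) (hn : 0 < n)
    (σ : ZMod (2 * n) → ZMod (2 * n))
    (hinv : Function.Involutive σ) (hfpf : ∀ i, σ i ≠ i) :
    pdPoly n (fun i => σ (i - 1) + 1) = pdPoly n σ :=
  pdPoly_rotation_invariant_general hn.ne' σ 1
end
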